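/- The representation σ₂ of the binary icosahedral group is irreducible: there is no nonzero vector v ∈ ℂ² that is simultaneously an eigenvector of A₂ and of B₂ (i.e., there do not exist v ≠ 0 and λ, μ ∈ ℂ with A₂·v = λ·v and B₂·v = μ·v). -/

import Mathlib

noncomputable section

/-- `e₅ = exp(2πi/5)`. -/
def e5 : ℂ := Complex.exp (2 * Real.pi * Complex.I / 5)

/-- The matrix `A₂`, image of the generator `r` under the representation `σ₂`. -/
def A2 : Matrix (Fin 2) (Fin 2) ℂ :=
  !![e5 - e5^2, -e5^2 - e5^4;
     -e5 - e5^4, -e5 - e5^3]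

/-- The matrix `B₂`, image of the generator `s` under the representation `σ₂`. -/
def B2 : Matrix (Fin 2) (Fin 2) ℂ :=
  !![1, -e5^3;
     e5^2, 0]

/-! If `A v = l v` and `B v = m v`, then the commutator `⁅A, B⁆ = A B - B A` kills `v`, so `v = 0`
as soon as `det ⁅A, B⁆` is a unit. For `A₂` and `B₂` this determinant is `(e₅ + e₅⁴)²`, the square
of the inverse golden ratio. The computation uses only `1 + e₅ + e₅² + e₅³ + e₅⁴ = 0`, so it is
valid at any root of the fifth cyclotomic polynomial in any commutative ring. -/

open Matrix

section CommonEigenvector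

variable {n R : Type*} [Fintype n] [CommRing R] {A B : Matrix n n R} {v : n → R} {l m : R}

lemma lie_mulVec_eq_zero (hA : A *ᵥ v = l • v) (hB : B *ᵥ v = m • v) : ⁅A, B⁆ *ᵥ v = 0 := by
  rw [Ring.lie_def, sub_mulVec, ← mulVec_mulVec, ← mulVec_mulVec, hA, hB, mulVec_smul, mulVec_smul,
    hA, hB, smul_comm, sub_self]

lemma eq_zero_of_isUnit_det_lie [DecidableEq n] (h : IsUnit ⁅A, B⁆.det)
    (hA : A *ᵥ v = l • v) (hB : B *ᵥ v = m • v) : v = 0 :=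
  mulVec_injective_of_isUnit ((isUnit_iff_isUnit_det _).mpr h)
    ((lie_mulVec_eq_zero hA hB).trans (mulVec_zero _).symm)

end CommonEigenvector

section FifthRoot

variable {R : Type*} [CommRing R] {e : R}

/-- The matrix of `σ₂(r)` with an element `e` of a commutative ring in place of `e₅`, so that
`A2 = sigma2R e5`. -/
def sigma2R (e : R) : Matrix (Fin 2) (Fin 2) R :=
  !![e - e ^ 2, -e ^ 2 - e ^ 4;
     -e - e ^ 4, -e - e ^ 3]

/-- The matrix of `σ₂(s)` with an element `e` of a commutative ring in place of `e₅`, so that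
`B2 = sigma2S e5`. -/
def sigma2S (e : R) : Matrix (Fin 2) (Fin 2) R :=
  !![1, -e ^ 3;
     e ^ 2, 0]

lemma isUnit_add_pow_four (he : 1 + e + e ^ 2 + e ^ 3 + e ^ 4 = 0) : IsUnit (e + e ^ 4) :=
  .of_mul_eq_one (-(e ^ 2 + e ^ 3)) (by linear_combination (-e ^ 3 + e - 1) * he)

lemma lie_sigma2 (he : 1 + e + e ^ 2 + e ^ 3 + e ^ 4 = 0) :
    ⁅sigma2R e, sigma2S e⁆ =
      !![-e - e ^ 2 - 2 * e ^ 4, 1 - e + e ^ 2 - e ^ 4;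
         -1 - e - 2 * e ^ 3, e + e ^ 2 + 2 * e ^ 4] := by
  have pow_five : e ^ 5 = 1 := by linear_combination (e - 1) * he
  rw [Ring.lie_def, sigma2R, sigma2S, mul_fin_two, mul_fin_two]
  ext i j
  fin_cases i <;> fin_cases j <;>
    simp only [Fin.zero_eta, Fin.mk_one, Matrix.sub_apply, of_apply, cons_val_zero,
      cons_val_one, cons_val_fin_one]
  · linear_combination -(e + e ^ 2) * pow_five
  · linear_combination (1 - e) * pow_five
  · linear_combination -pow_five
  · linear_combination (e + e ^ 2) * pow_five

lemma det_lie_sigma2 (he : 1 + e + e ^ 2 + e ^ 3 + e ^ 4 = 0) :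
    ⁅sigma2R e, sigma2S e⁆.det = (e + e ^ 4) ^ 2 := by
  rw [lie_sigma2 he, det_fin_two_of]
  linear_combination (-5 * e ^ 4 + 3 * e ^ 3 - 2 * e ^ 2 - e + 1) * he

theorem sigma2_irreducible_general (he : 1 + e + e ^ 2 + e ^ 3 + e ^ 4 = 0) :
    ¬ ∃ v : Fin 2 → R, v ≠ 0 ∧
      ∃ l m : R, sigma2R e *ᵥ v = l • v ∧ sigma2S e *ᵥ v = m • v := by
  rintro ⟨v, hv, l, m, hA, hB⟩
  have det_isUnit : IsUnit ⁅sigma2R e, sigma2S e⁆.det :=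
    det_lie_sigma2 he ▸ (isUnit_add_pow_four he).pow 2
  exact hv (eq_zero_of_isUnit_det_lie det_isUnit hA hB)

end FifthRoot

lemma isPrimitiveRoot_e5 : IsPrimitiveRoot e5 5 :=
  Complex.isPrimitiveRoot_exp 5 (by decide)

lemma geom_sum_e5 : 1 + e5 + e5 ^ 2 + e5 ^ 3 + e5 ^ 4 = 0 := by
  simpa [Finset.sum_range_succ] using isPrimitiveRoot_e5.geom_sum_eq_zero (by decide)

/-- The representation `σ₂` of the binary icosahedral group is
irreducible: no nonzero vector `v ∈ ℂ²` is simultaneously an eigenvector of `A₂`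
and of `B₂`. -/
theorem sigma2_irreducible :
    ¬ ∃ v : Fin 2 → ℂ, v ≠ 0 ∧
      ∃ l m : ℂ, A2.mulVec v = l • v ∧ B2.mulVec v = m • v :=
  sigma2_irreducible_general geom_sum_e5

end
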